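/- Let n ≥ 2 be an even integer and let u be a radially symmetric normal solution on ℝ^n with smooth Q-curvature Q satisfying (n−1)! ≤ Q(x) ≤ C·(|x|+1)^k for all x ∈ ℝ^n, for some constants C > 0 and k ≥ 0. Then ∫_{ℝ^n} e^{n u(x)} dx ≤ |S^n|, and equality holds if and only if Q(x) = (n−1)! for all x. -/

import Mathlib

open MeasureTheory Real Filter RealInnerProductSpace

/-- Volume of the standard unit n-sphere in ℝ^{n+1}: |Sⁿ| = 2 π^{(n+1)/2} / Γ((n+1)/2). -/
noncomputable def sphereVol (n : ℕ) : ℝ :=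
  2 * Real.pi ^ ((n + 1 : ℝ) / 2) / Real.Gamma ((n + 1 : ℝ) / 2)

/-- `u` is a normal solution on ℝⁿ with Q-curvature `Q`: both are smooth, `Q·e^{nu} ∈ L¹`,
and `u(x) = (2/((n−1)!·|Sⁿ|)) ∫ log(|y|/|x−y|)·Q(y)·e^{n·u(y)} dy + C` for some constant `C`. -/
def IsNormalSolution (n : ℕ) (u Q : EuclideanSpace ℝ (Fin n) → ℝ) : Prop :=
  ContDiff ℝ (⊤ : ℕ∞) u ∧ ContDiff ℝ (⊤ : ℕ∞) Q ∧
  Integrable (fun x => Q x * Real.exp (n * u x)) ∧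
  ∃ C : ℝ, ∀ x, u x =
    (2 / ((Nat.factorial (n - 1) : ℝ) * sphereVol n)) *
      ∫ y, Real.log (‖y‖ / ‖x - y‖) * (Q y * Real.exp (n * u y)) + C

/-
Averaging the potential of a radial `u` over the sphere replaces `log (‖x - y‖ / ‖y‖)` by
`H (log ‖x‖ - log ‖y‖)`, where the profile `H` is nondecreasing and `H δ - H (-δ) = δ` expresses the
symmetry of `‖x - y‖`. Write `e = exp (n u)`, `ρ = Q e`, `V = ∫ e`, and let `c` be the coefficient
of the potential. Dilating `e` gives the virial identity
`c ∬ e(x) ρ(y) H'(log ‖x‖ - log ‖y‖) = V`, while `H' δ + H' (-δ) = 1` gives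
`∬ e(x) e(y) H'(log ‖x‖ - log ‖y‖) = V² / 2`. Since `κ e ≤ ρ` and `H' ≥ 0`, it follows that
`c κ V² / 2 ≤ V`, with equality exactly when `ρ = κ e`.
-/

/-! ### Averages of the logarithm over circles -/

lemma integral_log_norm_circleMap_sub {w : ℂ} (hw : ‖w‖ < 1) :
    ∫ θ in 0..2 * π, log ‖circleMap 0 1 θ - w‖ = 0 := by
  have havg := circleAverage_log_norm_sub_const₀ hw
  rw [circleAverage_def, smul_eq_zero] at havg
  exact havg.resolve_left (by positivity)

lemma integral_log_two_mul_sub_cos_add_sin {A α β : ℝ} (hA : 0 < A) (h : α ^ 2 + β ^ 2 < A ^ 2) :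
    ∫ θ in 0..2 * π, log (2 * (A - (α * cos θ + β * sin θ))) =
      2 * π * log (A + √(A ^ 2 - (α ^ 2 + β ^ 2))) := by
  set D := √(A ^ 2 - (α ^ 2 + β ^ 2))
  have hD : D ^ 2 = A ^ 2 - (α ^ 2 + β ^ 2) := Real.sq_sqrt (by linarith)
  have hD0 : 0 < D := Real.sqrt_pos.2 (by linarith)
  have hz : 0 < A + D := add_pos hA hD0
  -- the root of smaller modulus of the quadratic polynomial in `exp (θ * I)` on the left
  let w : ℂ := ⟨α / (A + D), β / (A + D)⟩
  have hw : ‖w‖ < 1 := by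
    rw [← sq_lt_one_iff₀ (norm_nonneg w), ← Complex.normSq_eq_norm_sq, Complex.normSq_mk,
      div_mul_div_comm, div_mul_div_comm, ← add_div, div_lt_one (by positivity)]
    nlinarith
  have hfactor (θ : ℝ) :
      2 * (A - (α * cos θ + β * sin θ)) = (A + D) * ‖circleMap 0 1 θ - w‖ ^ 2 := by
    have hre : (circleMap 0 1 θ - w).re = cos θ - α / (A + D) := by
      simp [w, circleMap, Complex.exp_ofReal_mul_I_re]
    have him : (circleMap 0 1 θ - w).im = sin θ - β / (A + D) := by
      simp [w, circleMap, Complex.exp_ofReal_mul_I_im]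
    rw [← Complex.normSq_eq_norm_sq, Complex.normSq_apply, hre, him]
    field_simp
    linear_combination -(A + D) ^ 2 * sin_sq_add_cos_sq θ - hD
  have hne (θ : ℝ) : ‖circleMap 0 1 θ - w‖ ≠ 0 := by
    rw [norm_ne_zero_iff, sub_ne_zero]
    intro hθ
    rw [← hθ, norm_circleMap_zero, abs_one] at hw
    exact lt_irrefl 1 hw
  have hcont : Continuous fun θ => log ‖circleMap 0 1 θ - w‖ :=
    ((continuous_circleMap 0 1).sub continuous_const).norm.log hne
  calc ∫ θ in 0..2 * π, log (2 * (A - (α * cos θ + β * sin θ)))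
      = ∫ θ in 0..2 * π, (log (A + D) + 2 * log ‖circleMap 0 1 θ - w‖) := by
        refine intervalIntegral.integral_congr fun θ _ => ?_
        simp only [hfactor, log_mul hz.ne' (pow_ne_zero 2 (hne θ)), log_pow, Nat.cast_ofNat]
    _ = 2 * π * log (A + D) := by
        rw [intervalIntegral.integral_add intervalIntegrable_const
          ((hcont.const_mul 2).intervalIntegrable _ _), intervalIntegral.integral_const_mul,
          integral_log_norm_circleMap_sub hw, intervalIntegral.integral_const, smul_eq_mul]
        ring

/-- `log (‖r • ω - s • v‖ / s)` for unit vectors with `⟪v, ω⟫ = x` and `δ = log (r / s)`. -/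
noncomputable def logChord (δ x : ℝ) : ℝ := (δ + log (2 * (cosh δ - x))) / 2

lemma continuousOn_logChord {δ : ℝ} (hδ : δ ≠ 0) :
    ContinuousOn (logChord δ) (Set.Icc (-1) 1) := by
  have hpos (x) (hx : x ∈ Set.Icc (-1 : ℝ) 1) : 2 * (cosh δ - x) ≠ 0 := by
    have := one_lt_cosh.2 hδ
    have := hx.2
    exact ne_of_gt (by linarith)
  unfold logChord
  fun_prop (disch := assumption)

lemma exists_abs_logChord_le {δ : ℝ} (hδ : δ ≠ 0) :
    ∃ M, ∀ x, |x| ≤ 1 → |logChord δ x| ≤ M := by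
  obtain ⟨M, hM⟩ := isCompact_Icc.exists_bound_of_continuousOn (continuousOn_logChord hδ)
  exact ⟨M, fun x hx => hM x (abs_le.1 hx)⟩

lemma abs_cos_add_sin_le_one {α β : ℝ} (h : α ^ 2 + β ^ 2 ≤ 1) (θ : ℝ) :
    |α * cos θ + β * sin θ| ≤ 1 := by
  rw [← sq_le_one_iff_abs_le_one]
  nlinarith [sq_nonneg (α * sin θ - β * cos θ), sin_sq_add_cos_sq θ]

/-- The mean of `logChord δ ⟪v, ω⟫` as `v` runs over a circle of unit vectors, when `ω` has an
orthogonal projection of squared norm `a` onto the plane of the circle. -/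
noncomputable def circleLogMean (a δ : ℝ) : ℝ :=
  (δ + log (cosh δ + √(cosh δ ^ 2 - a))) / 2

lemma integral_logChord_cos_add_sin {α β δ : ℝ} (h : α ^ 2 + β ^ 2 ≤ 1) (hδ : δ ≠ 0) :
    ∫ θ in 0..2 * π, logChord δ (α * cos θ + β * sin θ) =
      2 * π * circleLogMean (α ^ 2 + β ^ 2) δ := by
  have hcosh := one_lt_cosh.2 hδ
  have hne (θ : ℝ) : 2 * (cosh δ - (α * cos θ + β * sin θ)) ≠ 0 := by
    have := (abs_le.1 (abs_cos_add_sin_le_one h θ)).2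
    exact ne_of_gt (by linarith)
  have hcont : Continuous fun θ => log (2 * (cosh δ - (α * cos θ + β * sin θ))) := by
    fun_prop (disch := assumption)
  unfold logChord
  rw [intervalIntegral.integral_div, intervalIntegral.integral_add intervalIntegrable_const
    (hcont.intervalIntegrable _ _),
    integral_log_two_mul_sub_cos_add_sin (cosh_pos δ) (by nlinarith),
    intervalIntegral.integral_const, circleLogMean, smul_eq_mul]
  ring

/-! ### Logarithmic profiles -/

/-- `H (log ‖x‖ - log ‖y‖)` behaves like an average of `log (‖x - y‖ / ‖y‖)` over rotations of `x`.
The field `sub_neg` is the trace of the symmetry of `‖x - y‖`; differentiability is not asked at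
`0`, where the circle means can have a corner. -/
structure IsLogProfile (H : ℝ → ℝ) : Prop where
  monotone : Monotone H
  sub_neg : ∀ δ, H δ - H (-δ) = δ
  differentiableAt : ∀ δ ≠ 0, DifferentiableAt ℝ H δ
  deriv_pos : ∀ δ > 0, 0 < deriv H δ

namespace IsLogProfile

variable {H : ℝ → ℝ}

lemma lipschitzWith (hH : IsLogProfile H) : LipschitzWith 1 H := by
  refine LipschitzWith.of_le_add fun s t => ?_
  rcases le_total s t with hst | hts
  · exact (hH.monotone hst).trans (le_add_of_nonneg_right dist_nonneg)
  · rw [Real.dist_eq, abs_of_nonneg (sub_nonneg.2 hts)]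
    linarith [hH.sub_neg s, hH.sub_neg t, hH.monotone (neg_le_neg hts)]

lemma deriv_nonneg (hH : IsLogProfile H) (δ : ℝ) : 0 ≤ deriv H δ :=
  hH.monotone.deriv_nonneg

lemma deriv_add_deriv_neg (hH : IsLogProfile H) {δ : ℝ} (hδ : δ ≠ 0) :
    deriv H δ + deriv H (-δ) = 1 := by
  have h := (hH.differentiableAt δ hδ).hasDerivAt.sub
    ((hH.differentiableAt (-δ) (neg_ne_zero.2 hδ)).hasDerivAt.comp δ (hasDerivAt_neg δ))
  have := h.unique (by simpa [Pi.sub_def, Function.comp_def, hH.sub_neg] using hasDerivAt_id' δ)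
  linarith

end IsLogProfile

lemma sinh_sq_le_cosh_sq_sub {a : ℝ} (ha : a ≤ 1) (δ : ℝ) : sinh δ ^ 2 ≤ cosh δ ^ 2 - a := by
  linarith [cosh_sq δ]

lemma cosh_sq_sub_pos {a δ : ℝ} (ha : a ≤ 1) (hδ : δ ≠ 0) : 0 < cosh δ ^ 2 - a :=
  (sq_pos_of_ne_zero (sinh_ne_zero.2 hδ)).trans_le (sinh_sq_le_cosh_sq_sub ha δ)

lemma hasDerivAt_circleLogMean {a δ : ℝ} (ha : a ≤ 1) (hδ : δ ≠ 0) :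
    HasDerivAt (circleLogMean a) ((1 + sinh δ / √(cosh δ ^ 2 - a)) / 2) δ := by
  have hS := Real.sqrt_pos.2 (cosh_sq_sub_pos ha hδ)
  have hC := cosh_pos δ
  have hsqrt := (((hasDerivAt_cosh δ).pow 2).sub_const a).sqrt (cosh_sq_sub_pos ha hδ).ne'
  have hlog := ((hasDerivAt_cosh δ).add hsqrt).log (add_pos hC hS).ne'
  refine (((hasDerivAt_id' δ).add hlog).div_const 2).congr_deriv ?_
  simp only [Pi.add_apply, Pi.pow_apply]
  set S := √(cosh δ ^ 2 - a)
  have : cosh δ + S ≠ 0 := (add_pos hC hS).ne'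
  field_simp
  push_cast
  ring

lemma continuous_circleLogMean (a : ℝ) : Continuous (circleLogMean a) := by
  have hpos (δ : ℝ) : cosh δ + √(cosh δ ^ 2 - a) ≠ 0 := by have := cosh_pos δ; positivity
  unfold circleLogMean
  fun_prop (disch := assumption)

lemma circleLogMean_sub_neg (a δ : ℝ) : circleLogMean a δ - circleLogMean a (-δ) = δ := by
  rw [circleLogMean, circleLogMean, cosh_neg]
  ring

lemma deriv_circleLogMean_nonneg {a δ : ℝ} (ha : a ≤ 1) (hδ : δ ≠ 0) :
    0 ≤ deriv (circleLogMean a) δ := by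
  have hS := Real.sqrt_pos.2 (cosh_sq_sub_pos ha hδ)
  have : -1 ≤ sinh δ / √(cosh δ ^ 2 - a) := by
    rw [le_div_iff₀ hS, neg_one_mul]
    exact (abs_le.1 (Real.abs_le_sqrt (sinh_sq_le_cosh_sq_sub ha δ))).1
  rw [(hasDerivAt_circleLogMean ha hδ).deriv]
  linarith

lemma half_le_deriv_circleLogMean {a δ : ℝ} (ha : a ≤ 1) (hδ : 0 < δ) :
    1 / 2 ≤ deriv (circleLogMean a) δ := by
  rw [(hasDerivAt_circleLogMean ha hδ.ne').deriv]
  have : 0 ≤ sinh δ / √(cosh δ ^ 2 - a) := div_nonneg (sinh_nonneg_iff.2 hδ.le) (Real.sqrt_nonneg _)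
  linarith

lemma isLogProfile_circleLogMean {a : ℝ} (ha : a ≤ 1) : IsLogProfile (circleLogMean a) where
  monotone := by
    have hdiff {s : Set ℝ} (hs : ∀ δ ∈ s, δ ≠ 0) : DifferentiableOn ℝ (circleLogMean a) s :=
      fun δ h => (hasDerivAt_circleLogMean ha (hs δ h)).differentiableAt.differentiableWithinAt
    have hcont := continuous_circleLogMean a
    refine MonotoneOn.Iic_union_Ici (a := 0) ?_ ?_
    · exact monotoneOn_of_deriv_nonneg (convex_Iic 0) hcont.continuousOn
        (by rw [interior_Iic]; exact hdiff fun δ h => h.ne)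
        (by rw [interior_Iic]; exact fun δ h => deriv_circleLogMean_nonneg ha h.ne)
    · exact monotoneOn_of_deriv_nonneg (convex_Ici 0) hcont.continuousOn
        (by rw [interior_Ici]; exact hdiff fun δ h => h.ne')
        (by rw [interior_Ici]; exact fun δ h => deriv_circleLogMean_nonneg ha h.ne')
  sub_neg := circleLogMean_sub_neg a
  differentiableAt δ hδ := (hasDerivAt_circleLogMean ha hδ).differentiableAt
  deriv_pos δ hδ := one_half_pos.trans_le (half_le_deriv_circleLogMean ha hδ)

lemma abs_circleLogMean_le {a : ℝ} (ha : 0 ≤ a) (δ : ℝ) :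
    |circleLogMean a δ| ≤ |δ| + log (2 * cosh δ) := by
  have hcosh := one_le_cosh δ
  have hsqrt : √(cosh δ ^ 2 - a) ≤ cosh δ :=
    (Real.sqrt_le_left (cosh_pos δ).le).2 (sub_le_self _ ha)
  have hlog0 : 0 ≤ log (cosh δ + √(cosh δ ^ 2 - a)) :=
    log_nonneg (hcosh.trans (le_add_of_nonneg_right (Real.sqrt_nonneg _)))
  have hlog : log (cosh δ + √(cosh δ ^ 2 - a)) ≤ log (2 * cosh δ) :=
    log_le_log (by positivity) (by linarith)
  rw [circleLogMean, abs_div, abs_two]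
  have := abs_add_le δ (log (cosh δ + √(cosh δ ^ 2 - a)))
  rw [abs_of_nonneg hlog0] at this
  linarith [abs_nonneg δ]

/-! ### Averages of the logarithm over spheres -/

section Inner

variable {E : Type*} [NormedAddCommGroup E] [InnerProductSpace ℝ E]

lemma norm_cos_smul_add_sin_smul {b : Fin 2 → E} (hb : Orthonormal ℝ b) (θ : ℝ) :
    ‖cos θ • b 0 + sin θ • b 1‖ = 1 := by
  rw [← pow_eq_one_iff_of_nonneg (norm_nonneg _) two_ne_zero, norm_add_sq_real, norm_smul,
    norm_smul, real_inner_smul_left, real_inner_smul_right, hb.1, hb.1, hb.2 zero_ne_one,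
    norm_eq_abs, norm_eq_abs]
  simp

lemma log_norm_div_norm_smul_sub {ω y : E} {r : ℝ} (hω : ‖ω‖ = 1) (hr : 0 < r) (hy : y ≠ 0)
    (hry : r ≠ ‖y‖) :
    log (‖y‖ / ‖r • ω - y‖) = -logChord (log r - log ‖y‖) ⟪‖y‖⁻¹ • y, ω⟫ := by
  have hs : 0 < ‖y‖ := norm_pos_iff.2 hy
  have hne : ‖r • ω - y‖ ≠ 0 := by
    rw [norm_ne_zero_iff, sub_ne_zero]
    rintro rfl
    exact hry (by rw [norm_smul, hω, mul_one, norm_of_nonneg hr.le])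
  have hsq : ‖r • ω - y‖ ^ 2 =
      r * ‖y‖ * (2 * (cosh (log r - log ‖y‖) - ⟪‖y‖⁻¹ • y, ω⟫)) := by
    rw [← log_div hr.ne' hs.ne', cosh_log (div_pos hr hs), norm_sub_sq_real, norm_smul, hω,
      norm_of_nonneg hr.le, real_inner_smul_left, real_inner_smul_left, real_inner_comm y ω]
    field_simp
    ring
  have hlog := congrArg log hsq
  have hfac : 2 * (cosh (log r - log ‖y‖) - ⟪‖y‖⁻¹ • y, ω⟫) ≠ 0 :=
    right_ne_zero_of_mul (hsq ▸ pow_ne_zero 2 hne)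
  rw [log_pow, log_mul (mul_pos hr hs).ne' hfac, log_mul hr.ne' hs.ne', Nat.cast_ofNat] at hlog
  rw [log_div hs.ne' hne, logChord]
  linarith

end Inner

section UnitSphere

variable (E : Type*) [NormedAddCommGroup E] [InnerProductSpace ℝ E] [FiniteDimensional ℝ E]
  [MeasurableSpace E] [BorelSpace E]

/-- The uniform probability measure on the unit sphere, as a measure on the ambient space: the law
of `‖z‖⁻¹ • z` for a uniform point `z` of the unit ball. -/
noncomputable def unitSphereMeasure : Measure E :=
  (ProbabilityTheory.cond volume (Metric.ball 0 1)).map fun z => ‖z‖⁻¹ • z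

variable {E}

lemma measurable_normalize : Measurable fun z : E => ‖z‖⁻¹ • z := by fun_prop

instance : IsProbabilityMeasure (unitSphereMeasure E) := by
  have : IsProbabilityMeasure (ProbabilityTheory.cond volume (Metric.ball (0 : E) 1)) :=
    ProbabilityTheory.cond_isProbabilityMeasure_of_finite
      (Metric.measure_ball_pos volume 0 one_pos).ne' measure_ball_lt_top.ne
  exact Measure.isProbabilityMeasure_map measurable_normalize.aemeasurable

lemma ae_unitSphereMeasure_norm_eq_one [Nontrivial E] : ∀ᵐ ω ∂unitSphereMeasure E, ‖ω‖ = 1 := by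
  refine (ae_map_iff measurable_normalize.aemeasurable
    (measurableSet_eq_fun measurable_norm measurable_const)).2 ?_
  have hne : ∀ᵐ z ∂(volume : Measure E), z ≠ 0 := Measure.ae_ne volume 0
  filter_upwards [ProbabilityTheory.cond_absolutelyContinuous.ae_le hne] with z hz
  exact norm_smul_inv_norm (𝕜 := ℝ) hz

lemma measurePreserving_unitSphereMeasure (g : E ≃ₗᵢ[ℝ] E) :
    MeasurePreserving g (unitSphereMeasure E) (unitSphereMeasure E) := by
  have hball : g ⁻¹' Metric.ball 0 1 = Metric.ball 0 1 := by ext; simp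
  have hcond : (ProbabilityTheory.cond volume (Metric.ball (0 : E) 1)).map g =
      ProbabilityTheory.cond volume (Metric.ball 0 1) := by
    have := (g.measurePreserving.restrict_preimage (s := Metric.ball 0 1) measurableSet_ball).map_eq
    rw [hball] at this
    rw [ProbabilityTheory.cond, Measure.map_smul, this]
  refine ⟨g.continuous.measurable, ?_⟩
  have hcomm : g ∘ (fun z : E => ‖z‖⁻¹ • z) = (fun z : E => ‖z‖⁻¹ • z) ∘ g := by
    ext z
    simp
  rw [unitSphereMeasure, Measure.map_map g.continuous.measurable measurable_normalize, hcomm,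
    ← Measure.map_map measurable_normalize g.continuous.measurable, hcond]

lemma integral_inner_unitSphereMeasure_congr (F : ℝ → ℝ) {v w : E} (h : ‖v‖ = ‖w‖) :
    ∫ ω, F ⟪v, ω⟫ ∂unitSphereMeasure E = ∫ ω, F ⟪w, ω⟫ ∂unitSphereMeasure E := by
  let g := (ℝ ∙ (v - w))ᗮ.reflection
  rw [← (measurePreserving_unitSphereMeasure g).integral_comp g.toHomeomorph.measurableEmbedding
    fun ω => F ⟪w, ω⟫, ← Submodule.reflection_sub h]
  simp only [g, LinearIsometryEquiv.inner_map_map]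

/-- The mean of `logChord δ ⟪v, ω⟫` over the unit sphere, for any fixed unit vector `v`. It is
expressed through circle means, which are explicit, by first averaging `v` over the unit circle of
the plane of the orthonormal pair `b`. -/
noncomputable def sphereLogMean (b : Fin 2 → E) (δ : ℝ) : ℝ :=
  ∫ ω, circleLogMean (∑ i, ⟪b i, ω⟫ ^ 2) δ ∂unitSphereMeasure E

lemma ae_sum_inner_sq_le_one [Nontrivial E] {b : Fin 2 → E} (hb : Orthonormal ℝ b) :
    ∀ᵐ ω ∂unitSphereMeasure E, ∑ i, ⟪b i, ω⟫ ^ 2 ≤ 1 := by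
  filter_upwards [ae_unitSphereMeasure_norm_eq_one (E := E)] with ω hω
  simpa [hω] using hb.sum_inner_products_le ω (s := Finset.univ)

lemma measurable_circleLogMean_sum_inner_sq (b : Fin 2 → E) (δ : ℝ) :
    Measurable fun ω => circleLogMean (∑ i, ⟪b i, ω⟫ ^ 2) δ := by
  unfold circleLogMean
  fun_prop

lemma integrable_circleLogMean_sum_inner_sq (b : Fin 2 → E) (δ : ℝ) :
    Integrable (fun ω => circleLogMean (∑ i, ⟪b i, ω⟫ ^ 2) δ) (unitSphereMeasure E) := by
  refine Integrable.mono' (integrable_const (|δ| + log (2 * cosh δ)))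
    (measurable_circleLogMean_sum_inner_sq b δ).aestronglyMeasurable (.of_forall fun ω => ?_)
  exact abs_circleLogMean_le (Finset.sum_nonneg fun i _ => sq_nonneg _) δ

lemma hasDerivAt_sphereLogMean [Nontrivial E] {b : Fin 2 → E} (hb : Orthonormal ℝ b)
    {δ : ℝ} (hδ : δ ≠ 0) :
    Integrable (fun ω => deriv (circleLogMean (∑ i, ⟪b i, ω⟫ ^ 2)) δ) (unitSphereMeasure E) ∧
    HasDerivAt (sphereLogMean b)
      (∫ ω, deriv (circleLogMean (∑ i, ⟪b i, ω⟫ ^ 2)) δ ∂unitSphereMeasure E) δ := by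
  have hbessel := ae_sum_inner_sq_le_one hb
  refine hasDerivAt_integral_of_dominated_loc_of_lip (bound := fun _ => 1) univ_mem
    (.of_forall fun δ => (measurable_circleLogMean_sum_inner_sq b δ).aestronglyMeasurable)
    (integrable_circleLogMean_sum_inner_sq b δ) ?_ ?_ (integrable_const 1) ?_
  · have hmeas : Measurable fun ω =>
        (1 + sinh δ / √(cosh δ ^ 2 - ∑ i, ⟪b i, ω⟫ ^ 2)) / 2 := by fun_prop
    refine hmeas.aestronglyMeasurable.congr ?_
    filter_upwards [hbessel] with ω hω
    exact (hasDerivAt_circleLogMean hω hδ).deriv.symm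
  · filter_upwards [hbessel] with ω hω
    rw [nnabs_of_nonneg zero_le_one, toNNReal_one]
    exact (isLogProfile_circleLogMean hω).lipschitzWith.lipschitzOnWith
  · filter_upwards [hbessel] with ω hω
    exact ((isLogProfile_circleLogMean hω).differentiableAt δ hδ).hasDerivAt

lemma isLogProfile_sphereLogMean [Nontrivial E] {b : Fin 2 → E} (hb : Orthonormal ℝ b) :
    IsLogProfile (sphereLogMean b) where
  monotone s t hst := by
    refine integral_mono_ae (integrable_circleLogMean_sum_inner_sq b s)
      (integrable_circleLogMean_sum_inner_sq b t) ?_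
    filter_upwards [ae_sum_inner_sq_le_one hb] with ω hω
    exact (isLogProfile_circleLogMean hω).monotone hst
  sub_neg δ := by
    rw [sphereLogMean, sphereLogMean, ← integral_sub (integrable_circleLogMean_sum_inner_sq b δ)
      (integrable_circleLogMean_sum_inner_sq b (-δ))]
    simp only [circleLogMean_sub_neg, integral_const, probReal_univ, one_smul]
  differentiableAt δ hδ := (hasDerivAt_sphereLogMean hb hδ).2.differentiableAt
  deriv_pos δ hδ := by
    obtain ⟨hint, hderiv⟩ := hasDerivAt_sphereLogMean hb hδ.ne'
    rw [hderiv.deriv]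
    calc (0 : ℝ) < ∫ _, 1 / 2 ∂unitSphereMeasure E := by simp
      _ ≤ _ := integral_mono_ae (integrable_const _) hint (by
        filter_upwards [ae_sum_inner_sq_le_one hb] with ω hω
        exact half_le_deriv_circleLogMean hω hδ)

lemma integrable_logChord_inner_circle [Nontrivial E] {b : Fin 2 → E} (hb : Orthonormal ℝ b)
    {δ : ℝ} (hδ : δ ≠ 0) :
    Integrable (fun p : ℝ × E => logChord δ ⟪cos p.1 • b 0 + sin p.1 • b 1, p.2⟫)
      ((volume.restrict (Set.Ioc 0 (2 * π))).prod (unitSphereMeasure E)) := by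
  obtain ⟨M, hM⟩ := exists_abs_logChord_le hδ
  have hmeas : Measurable fun p : ℝ × E =>
      logChord δ ⟪cos p.1 • b 0 + sin p.1 • b 1, p.2⟫ := by
    unfold logChord
    fun_prop
  refine Integrable.of_bound hmeas.aestronglyMeasurable M ?_
  filter_upwards [Measure.quasiMeasurePreserving_snd.ae
    (ae_unitSphereMeasure_norm_eq_one (E := E))] with p hp
  refine hM _ ((abs_real_inner_le_norm _ _).trans ?_)
  rw [norm_cos_smul_add_sin_smul hb, hp, one_mul]

lemma integral_logChord_inner [Nontrivial E] {b : Fin 2 → E} (hb : Orthonormal ℝ b)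
    {v : E} (hv : ‖v‖ = 1) {δ : ℝ} (hδ : δ ≠ 0) :
    ∫ ω, logChord δ ⟪v, ω⟫ ∂unitSphereMeasure E = sphereLogMean b δ := by
  refine mul_left_cancel₀ two_pi_pos.ne' ?_
  calc 2 * π * ∫ ω, logChord δ ⟪v, ω⟫ ∂unitSphereMeasure E
      = ∫ θ in 0..2 * π, ∫ ω, logChord δ ⟪cos θ • b 0 + sin θ • b 1, ω⟫ ∂unitSphereMeasure E := by
        simp only [integral_inner_unitSphereMeasure_congr (logChord δ)
          ((norm_cos_smul_add_sin_smul hb _).trans hv.symm), intervalIntegral.integral_const,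
          sub_zero, smul_eq_mul]
    _ = ∫ ω, (∫ θ in 0..2 * π, logChord δ ⟪cos θ • b 0 + sin θ • b 1, ω⟫)
          ∂unitSphereMeasure E := by
        simp only [intervalIntegral.integral_of_le two_pi_pos.le]
        exact integral_integral_swap (integrable_logChord_inner_circle hb hδ)
    _ = ∫ ω, 2 * π * circleLogMean (∑ i, ⟪b i, ω⟫ ^ 2) δ ∂unitSphereMeasure E := by
        refine integral_congr_ae ?_
        filter_upwards [ae_sum_inner_sq_le_one hb] with ω hω
        rw [Fin.sum_univ_two] at hω ⊢
        rw [← integral_logChord_cos_add_sin hω hδ]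
        simp only [inner_add_left, real_inner_smul_left, mul_comm]
    _ = 2 * π * sphereLogMean b δ := integral_const_mul _ _

lemma integral_log_norm_div_norm_smul_sub [Nontrivial E] {b : Fin 2 → E} (hb : Orthonormal ℝ b)
    {y : E} {r : ℝ} (hr : 0 < r) (hy : y ≠ 0) (hry : r ≠ ‖y‖) :
    ∫ ω, log (‖y‖ / ‖r • ω - y‖) ∂unitSphereMeasure E = -sphereLogMean b (log r - log ‖y‖) := by
  have hδ : log r - log ‖y‖ ≠ 0 :=
    sub_ne_zero.2 fun h => hry (log_injOn_pos hr (norm_pos_iff.2 hy) h)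
  rw [← integral_logChord_inner hb (norm_smul_inv_norm (𝕜 := ℝ) hy) hδ, ← integral_neg]
  refine integral_congr_ae ?_
  filter_upwards [ae_unitSphereMeasure_norm_eq_one (E := E)] with ω hω
  exact log_norm_div_norm_smul_sub hω hr hy hry

end UnitSphere

/-! ### Integrability of logarithmic potentials -/

lemma abs_log_norm_div_norm_sub_le {E : Type*} [NormedAddCommGroup E] (w y : E) :
    |log (‖y‖ / ‖w - y‖)| ≤ ‖w‖ * (‖y‖⁻¹ + ‖w - y‖⁻¹) := by
  rcases eq_or_ne y 0 with rfl | hy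
  · rw [norm_zero, zero_div, log_zero, abs_zero]
    positivity
  rcases eq_or_ne (w - y) 0 with hw | hw
  · rw [hw, norm_zero, div_zero, log_zero, abs_zero]
    positivity
  have hy := norm_pos_iff.2 hy
  have hw := norm_pos_iff.2 hw
  have hupper : log (‖y‖ / ‖w - y‖) ≤ ‖w‖ * ‖w - y‖⁻¹ := calc
    log (‖y‖ / ‖w - y‖) ≤ ‖y‖ / ‖w - y‖ - 1 := log_le_sub_one_of_pos (div_pos hy hw)
    _ = (‖y‖ - ‖w - y‖) / ‖w - y‖ := by rw [sub_div, div_self hw.ne']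
    _ ≤ ‖w‖ * ‖w - y‖⁻¹ := by
      rw [← div_eq_mul_inv]
      gcongr
      linarith [norm_le_norm_add_norm_sub' y w, norm_sub_rev w y]
  have hlower : log (‖w - y‖ / ‖y‖) ≤ ‖w‖ * ‖y‖⁻¹ := calc
    log (‖w - y‖ / ‖y‖) ≤ ‖w - y‖ / ‖y‖ - 1 := log_le_sub_one_of_pos (div_pos hw hy)
    _ = (‖w - y‖ - ‖y‖) / ‖y‖ := by rw [sub_div, div_self hy.ne']
    _ ≤ ‖w‖ * ‖y‖⁻¹ := by
      rw [← div_eq_mul_inv]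
      gcongr
      linarith [norm_sub_le w y]
  rw [← inv_div, log_inv] at hlower
  have : 0 ≤ ‖w‖ * ‖w - y‖⁻¹ := by positivity
  have : 0 ≤ ‖w‖ * ‖y‖⁻¹ := by positivity
  rw [abs_le, mul_add]
  constructor <;> linarith

section Riesz

variable {E : Type*} [NormedAddCommGroup E] [NormedSpace ℝ E] [FiniteDimensional ℝ E]
  [MeasurableSpace E] [BorelSpace E] {μ : Measure E} [μ.IsAddHaarMeasure]

lemma integrableOn_inv_norm_ball (hE : 2 ≤ Module.finrank ℝ E) :
    IntegrableOn (fun y : E => ‖y‖⁻¹) (Metric.ball 0 1) μ := by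
  have : Nontrivial E := Module.nontrivial_of_finrank_pos (R := ℝ) (by omega)
  rw [integrableOn_fun_norm_addHaar μ (f := fun r => r⁻¹)]
  refine Integrable.mono' (g := fun _ => (1 : ℝ)) (integrable_const 1) (by fun_prop) ?_
  filter_upwards [ae_restrict_mem measurableSet_Ioo] with r ⟨hr0, hr1⟩
  obtain ⟨k, hk⟩ := Nat.exists_eq_add_of_le hE
  rw [hk, show 2 + k - 1 = k + 1 by omega, smul_eq_mul, pow_succ,
    mul_inv_cancel_right₀ hr0.ne', norm_of_nonneg (pow_nonneg hr0.le _)]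
  exact pow_le_one₀ hr0.le hr1.le

lemma exists_integral_inv_norm_sub_mul_le (hE : 2 ≤ Module.finrank ℝ E) {ρ : E → ℝ}
    (hρ : Continuous ρ) (hρi : Integrable ρ μ) (R : ℝ) :
    ∃ M, ∀ w : E, ‖w‖ ≤ R → Integrable (fun y => ‖w - y‖⁻¹ * |ρ y|) μ ∧
      ∫ y, ‖w - y‖⁻¹ * |ρ y| ∂μ ≤ M := by
  obtain ⟨B, hB⟩ := (isCompact_closedBall (0 : E) (R + 1)).exists_bound_of_continuousOn
    hρ.continuousOn
  set k : E → ℝ := (Metric.ball 0 1).indicator fun y => ‖y‖⁻¹ with hk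
  have hki : Integrable k μ :=
    (integrable_indicator_iff measurableSet_ball).2 (integrableOn_inv_norm_ball hE)
  refine ⟨∫ y, (B * k y + |ρ y|) ∂μ, fun w hw => ?_⟩
  have hdom : Integrable (fun y => B * k (w - y) + |ρ y|) μ :=
    ((hki.comp_sub_left w).const_mul B).add hρi.abs
  have hle (y : E) : ‖w - y‖⁻¹ * |ρ y| ≤ B * k (w - y) + |ρ y| := by
    by_cases hy : w - y ∈ Metric.ball (0 : E) 1
    · rw [hk, Set.indicator_of_mem hy]
      have hyR : y ∈ Metric.closedBall (0 : E) (R + 1) := by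
        rw [mem_ball_zero_iff] at hy
        rw [mem_closedBall_zero_iff]
        linarith [norm_le_norm_add_norm_sub w y]
      have := mul_le_mul_of_nonneg_left (hB y hyR) (inv_nonneg.2 (norm_nonneg (w - y)))
      rw [norm_eq_abs] at this
      linarith [abs_nonneg (ρ y)]
    · rw [hk, Set.indicator_of_notMem hy, mul_zero, zero_add]
      rw [mem_ball_zero_iff, not_lt] at hy
      exact mul_le_of_le_one_left (abs_nonneg (ρ y)) (inv_le_one_of_one_le₀ hy)
  have hint : Integrable (fun y => ‖w - y‖⁻¹ * |ρ y|) μ := by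
    refine hdom.mono' (by fun_prop) (.of_forall fun y => ?_)
    rw [norm_of_nonneg (by positivity)]
    exact hle y
  refine ⟨hint, (integral_mono hint hdom hle).trans_eq ?_⟩
  rw [integral_add ((hki.comp_sub_left w).const_mul B) hρi.abs,
    integral_add (hki.const_mul B) hρi.abs, integral_const_mul, integral_const_mul,
    integral_sub_left_eq_self k μ w]

lemma exists_integral_norm_log_norm_div_norm_sub_mul_le (hE : 2 ≤ Module.finrank ℝ E)
    {ρ : E → ℝ} (hρ : Continuous ρ) (hρi : Integrable ρ μ) (R : ℝ) :
    ∃ M, ∀ w : E, ‖w‖ ≤ R → Integrable (fun y => log (‖y‖ / ‖w - y‖) * ρ y) μ ∧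
      ∫ y, ‖log (‖y‖ / ‖w - y‖) * ρ y‖ ∂μ ≤ M := by
  obtain ⟨M, hM⟩ := exists_integral_inv_norm_sub_mul_le hE hρ hρi |R|
  refine ⟨|R| * (M + M), fun w hw => ?_⟩
  obtain ⟨hi₀, hM₀⟩ := hM 0 (by simp)
  simp only [zero_sub, norm_neg] at hi₀ hM₀
  obtain ⟨hi, hMw⟩ := hM w (hw.trans (le_abs_self R))
  have hdom : Integrable (fun y => ‖w‖ * (‖y‖⁻¹ * |ρ y| + ‖w - y‖⁻¹ * |ρ y|)) μ :=
    (hi₀.add hi).const_mul ‖w‖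
  have hle (y : E) : ‖log (‖y‖ / ‖w - y‖) * ρ y‖ ≤
      ‖w‖ * (‖y‖⁻¹ * |ρ y| + ‖w - y‖⁻¹ * |ρ y|) := by
    rw [norm_mul, norm_eq_abs, norm_eq_abs, ← add_mul, ← mul_assoc]
    exact mul_le_mul_of_nonneg_right (abs_log_norm_div_norm_sub_le w y) (abs_nonneg _)
  have hint : Integrable (fun y => log (‖y‖ / ‖w - y‖) * ρ y) μ :=
    hdom.mono' (by have := hρ.measurable; fun_prop) (.of_forall hle)
  refine ⟨hint, (integral_mono hint.norm hdom hle).trans ?_⟩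
  rw [integral_const_mul, integral_add hi₀ hi]
  gcongr
  exact hw.trans (le_abs_self R)

lemma ae_norm_ne [Nontrivial E] (r : ℝ) : ∀ᵐ y ∂μ, ‖y‖ ≠ r := by
  rw [ae_iff]
  simpa [Metric.sphere] using Measure.addHaar_sphere μ (0 : E) r

end Riesz

/-! ### The virial identity -/

section Energy

variable {E : Type*} [NormedAddCommGroup E]

/-- `log (‖x‖ / ‖y‖)`, the radial variable of the averaged kernel. Since `log 0 = 0`, it is
meaningful only for nonzero `x` and `y`. -/
noncomputable def logRatio (x y : E) : ℝ := log ‖x‖ - log ‖y‖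

lemma logRatio_exp_smul [NormedSpace ℝ E] (t : ℝ) {x : E} (hx : x ≠ 0) (y : E) :
    logRatio (exp t • x) y = t + logRatio x y := by
  rw [logRatio, norm_smul, norm_of_nonneg (exp_pos t).le,
    log_mul (exp_ne_zero t) (norm_ne_zero_iff.2 hx), log_exp, logRatio, add_sub_assoc]

variable [MeasurableSpace E] {H : ℝ → ℝ} {μ : Measure E} {f g : E → ℝ}

lemma measurable_logRatio [OpensMeasurableSpace E] :
    Measurable fun p : E × E => logRatio p.1 p.2 := by
  unfold logRatio
  fun_prop

/-- The change in the interaction energy of `f` and `g` with kernel `H (log ‖x‖ - log ‖y‖)` when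
the points `x` carrying `f` are dilated by `exp t`. The increment is integrable even when the energy
is not. -/
noncomputable def dilationEnergy (H : ℝ → ℝ) (μ : Measure E) (f g : E → ℝ) (t : ℝ) : ℝ :=
  ∫ p, f p.1 * g p.2 * (H (t + logRatio p.1 p.2) - H (logRatio p.1 p.2)) ∂μ.prod μ

/-- The derivative at `t = 0` of `dilationEnergy H μ f g t`. -/
noncomputable def virialForm (H : ℝ → ℝ) (μ : Measure E) (f g : E → ℝ) : ℝ :=
  ∫ p, f p.1 * g p.2 * deriv H (logRatio p.1 p.2) ∂μ.prod μ

lemma IsLogProfile.virialForm_nonneg (hH : IsLogProfile H) (hf : 0 ≤ f) (hg : 0 ≤ g) :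
    0 ≤ virialForm H μ f g :=
  integral_nonneg fun p => mul_nonneg (mul_nonneg (hf p.1) (hg p.2)) (hH.deriv_nonneg _)

lemma IsLogProfile.integrable_dilationEnergy [OpensMeasurableSpace E] [SFinite μ]
    (hH : IsLogProfile H) (hf : Integrable f μ) (hg : Integrable g μ) (t : ℝ) :
    Integrable (fun p => f p.1 * g p.2 * (H (t + logRatio p.1 p.2) - H (logRatio p.1 p.2)))
      (μ.prod μ) := by
  have hmeas : Measurable fun p : E × E => H (t + logRatio p.1 p.2) - H (logRatio p.1 p.2) :=
    (hH.lipschitzWith.continuous.measurable.comp (measurable_logRatio.const_add t)).sub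
      (hH.lipschitzWith.continuous.measurable.comp measurable_logRatio)
  refine (hf.mul_prod hg).mul_bdd (c := |t|) hmeas.aestronglyMeasurable (.of_forall fun p => ?_)
  simpa [dist_eq] using hH.lipschitzWith.dist_le_mul (t + logRatio p.1 p.2) (logRatio p.1 p.2)

lemma IsLogProfile.integrable_virialForm [OpensMeasurableSpace E] [SFinite μ]
    (hH : IsLogProfile H) (hf : Integrable f μ) (hg : Integrable g μ) :
    Integrable (fun p => f p.1 * g p.2 * deriv H (logRatio p.1 p.2)) (μ.prod μ) :=
  (hf.mul_prod hg).mul_bdd ((measurable_deriv H).comp measurable_logRatio).aestronglyMeasurable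
    (.of_forall fun _ => norm_deriv_le_of_lipschitz hH.lipschitzWith)

lemma IsLogProfile.virialForm_sub_const_mul [OpensMeasurableSpace E] [SFinite μ]
    (hH : IsLogProfile H) {h : E → ℝ} (hf : Integrable f μ) (hg : Integrable g μ)
    (hh : Integrable h μ) (κ : ℝ) :
    virialForm H μ f (fun x => g x - κ * h x) = virialForm H μ f g - κ * virialForm H μ f h := by
  unfold virialForm
  rw [← integral_const_mul, ← integral_sub (hH.integrable_virialForm hf hg)
    ((hH.integrable_virialForm hf hh).const_mul κ)]
  refine integral_congr_ae (.of_forall fun p => ?_)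
  ring

variable [NormedSpace ℝ E] [FiniteDimensional ℝ E] [BorelSpace E] [μ.IsAddHaarMeasure]

lemma ae_logRatio_ne_zero [Nontrivial E] : ∀ᵐ p ∂μ.prod μ, logRatio p.1 p.2 ≠ 0 := by
  refine (Measure.ae_prod_iff_ae_ae
    (measurableSet_eq_fun measurable_logRatio measurable_const).compl).2 ?_
  filter_upwards [ae_norm_ne (μ := μ) 0] with x hx
  filter_upwards [ae_norm_ne (μ := μ) 0, ae_norm_ne (μ := μ) ‖x‖] with y hy hxy
  exact sub_ne_zero.2 fun h => hxy
    (log_injOn_pos ((norm_nonneg x).lt_of_ne' hx) ((norm_nonneg y).lt_of_ne' hy) h).symm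

lemma IsLogProfile.hasDerivAt_dilationEnergy [Nontrivial E] (hH : IsLogProfile H)
    (hf : Integrable f μ) (hg : Integrable g μ) :
    HasDerivAt (dilationEnergy H μ f g) (virialForm H μ f g) 0 := by
  have hint := hH.integrable_dilationEnergy hf hg
  refine (hasDerivAt_integral_of_dominated_loc_of_lip (bound := fun p => f p.1 * g p.2) univ_mem
    (.of_forall fun t => (hint t).aestronglyMeasurable) (hint 0)
    (hH.integrable_virialForm hf hg).aestronglyMeasurable (.of_forall fun p => ?_)
    (hf.mul_prod hg) ?_).2
  · refine LipschitzOnWith.of_dist_le_mul fun s _ t _ => ?_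
    rw [dist_eq, ← mul_sub, sub_sub_sub_cancel_right, abs_mul, coe_nnabs]
    gcongr
    simpa [dist_eq] using
      hH.lipschitzWith.dist_le_mul (s + logRatio p.1 p.2) (t + logRatio p.1 p.2)
  · filter_upwards [ae_logRatio_ne_zero (μ := μ)] with p hp
    have hderiv := (hH.differentiableAt _ hp).hasDerivAt
    rw [← zero_add (logRatio p.1 p.2)] at hderiv
    simpa using ((hderiv.comp_add_const 0 (logRatio p.1 p.2)).sub_const
      (H (logRatio p.1 p.2))).const_mul (f p.1 * g p.2)

lemma IsLogProfile.virialForm_self [Nontrivial E] (hH : IsLogProfile H) (hf : Integrable f μ) :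
    virialForm H μ f f = (∫ x, f x ∂μ) ^ 2 / 2 := by
  have hint := hH.integrable_virialForm hf hf
  have hsum : (fun p => f p.1 * f p.2 * deriv H (logRatio p.1 p.2) +
      f p.2 * f p.1 * deriv H (logRatio p.2 p.1)) =ᵐ[μ.prod μ] fun p => f p.1 * f p.2 := by
    filter_upwards [ae_logRatio_ne_zero (μ := μ)] with p hp
    have hneg : logRatio p.2 p.1 = -logRatio p.1 p.2 := (neg_sub _ _).symm
    rw [hneg]
    linear_combination f p.1 * f p.2 * hH.deriv_add_deriv_neg hp
  have hdouble : virialForm H μ f f + virialForm H μ f f = (∫ x, f x ∂μ) ^ 2 := calc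
    _ = virialForm H μ f f +
        ∫ p, f p.2 * f p.1 * deriv H (logRatio p.2 p.1) ∂μ.prod μ := by
      congr 1
      exact (integral_prod_swap _).symm
    _ = ∫ p, f p.1 * f p.2 ∂μ.prod μ := by
      exact (integral_add hint hint.swap).symm.trans (integral_congr_ae hsum)
    _ = (∫ x, f x ∂μ) ^ 2 := by rw [integral_prod_mul, sq]
  linarith

lemma IsLogProfile.ae_eq_zero_of_virialForm_eq_zero [Nontrivial E] (hH : IsLogProfile H)
    (hf : Integrable f μ) (hg : Integrable g μ) (hf0 : ∀ x, 0 < f x) (hg0 : 0 ≤ g)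
    (h : virialForm H μ f g = 0) : g =ᵐ[μ] 0 := by
  have hnonneg (p : E × E) : 0 ≤ f p.1 * g p.2 * deriv H (logRatio p.1 p.2) :=
    mul_nonneg (mul_nonneg (hf0 p.1).le (hg0 p.2)) (hH.deriv_nonneg _)
  have hzero := (integral_eq_zero_iff_of_nonneg hnonneg (hH.integrable_virialForm hf hg)).1 h
  have hswap := Measure.ae_ae_of_ae_prod
    (Measure.measurePreserving_swap.quasiMeasurePreserving.ae hzero)
  filter_upwards [hswap, ae_norm_ne (μ := μ) 0] with y hy hy0
  obtain ⟨x₀, hx₀⟩ := NormedSpace.exists_lt_norm ℝ E ‖y‖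
  have hpos : μ {x | ‖y‖ < ‖x‖} ≠ 0 :=
    ((isOpen_lt continuous_const continuous_norm).measure_pos μ ⟨x₀, hx₀⟩).ne'
  obtain ⟨x, hx, hxy⟩ := ((frequently_ae_mem_iff.2 hpos).and_eventually hy).exists
  have hderiv : 0 < deriv H (logRatio x y) :=
    hH.deriv_pos _ (sub_pos.2 (log_lt_log ((norm_nonneg y).lt_of_ne' hy0) hx))
  simpa [(hf0 x).ne', hderiv.ne'] using hxy

lemma IsLogProfile.mul_dilationEnergy [Nontrivial E] (hH : IsLogProfile H) {u ρ : E → ℝ} {c C : ℝ}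
    (hf : Integrable f μ) (hρ : Integrable ρ μ)
    (hint : ∀ x ≠ 0, Integrable (fun y => H (logRatio x y) * ρ y) μ)
    (hu : ∀ x ≠ 0, u x = C - c * ∫ y, H (logRatio x y) * ρ y ∂μ) (t : ℝ) :
    Integrable (fun x => f x * (u x - u (exp t • x))) μ ∧
      c * dilationEnergy H μ f ρ t = ∫ x, f x * (u x - u (exp t • x)) ∂μ := by
  have henergy := hH.integrable_dilationEnergy hf hρ t
  have hslice : (fun x => c * ∫ y, f x * ρ y * (H (t + logRatio x y) - H (logRatio x y)) ∂μ)
      =ᵐ[μ] fun x => f x * (u x - u (exp t • x)) := by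
    filter_upwards [Measure.ae_ne μ 0] with x hx
    have hint' := hint (exp t • x) (smul_ne_zero (exp_ne_zero t) hx)
    rw [hu x hx, hu (exp t • x) (smul_ne_zero (exp_ne_zero t) hx), sub_sub_sub_cancel_left,
      ← mul_sub, ← integral_sub hint' (hint x hx), mul_left_comm, ← integral_const_mul]
    simp only [logRatio_exp_smul t hx, ← sub_mul, mul_assoc, mul_comm (ρ _), integral_const_mul]
  refine ⟨(henergy.integral_prod_left.const_mul c).congr hslice, ?_⟩
  rw [dilationEnergy, integral_prod _ henergy, ← integral_const_mul, integral_congr_ae hslice]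

lemma one_sub_exp_mul_integral_exp_le {u : E → ℝ} (d t : ℝ)
    (hu : Integrable (fun x => exp (d * u x)) μ)
    (hdiff : Integrable (fun x => exp (d * u x) * (u x - u (exp t • x))) μ) :
    (1 - exp (-(Module.finrank ℝ E * t))) * ∫ x, exp (d * u x) ∂μ ≤
      d * ∫ x, exp (d * u x) * (u x - u (exp t • x)) ∂μ := by
  have hdil : Integrable (fun x => exp (d * u (exp t • x))) μ := hu.comp_smul (exp_pos t).ne'
  have hscale : ∫ x, exp (d * u (exp t • x)) ∂μ =
      exp (-(Module.finrank ℝ E * t)) * ∫ x, exp (d * u x) ∂μ := by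
    rw [Measure.integral_comp_smul μ (fun x => exp (d * u x)) (exp t), abs_of_pos (by positivity),
      ← exp_nat_mul, ← exp_neg, smul_eq_mul]
  rw [sub_mul, one_mul, ← hscale, ← integral_sub hu hdil, ← integral_const_mul]
  refine integral_mono (hu.sub hdil) (hdiff.const_mul d) fun x => ?_
  have := mul_le_mul_of_nonneg_left (add_one_le_exp (d * u (exp t • x) - d * u x))
    (exp_pos (d * u x)).le
  rw [← exp_add, add_sub_cancel] at this
  linarith

lemma IsLogProfile.mul_virialForm_exp [Nontrivial E] (hH : IsLogProfile H) {u ρ : E → ℝ} {c C : ℝ}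
    (he : Integrable (fun x => exp (Module.finrank ℝ E * u x)) μ) (hρ : Integrable ρ μ)
    (hint : ∀ x ≠ 0, Integrable (fun y => H (logRatio x y) * ρ y) μ)
    (hu : ∀ x ≠ 0, u x = C - c * ∫ y, H (logRatio x y) * ρ y ∂μ) :
    c * virialForm H μ (fun x => exp (Module.finrank ℝ E * u x)) ρ =
      ∫ x, exp (Module.finrank ℝ E * u x) ∂μ := by
  set d : ℝ := (Module.finrank ℝ E : ℝ)
  have hd : d ≠ 0 := Nat.cast_ne_zero.2 Module.finrank_pos.ne'
  set e : E → ℝ := fun x => exp (d * u x)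
  -- `gap` is nonnegative and vanishes at `0`, so its derivative there is zero; this replaces an
  -- integration by parts, which would need a derivative of `u`.
  let gap (t : ℝ) : ℝ := d * (c * dilationEnergy H μ e ρ t) - (1 - exp (-(d * t))) * ∫ x, e x ∂μ
  have hgap (t : ℝ) : 0 ≤ gap t := by
    obtain ⟨hdiff, henergy⟩ := hH.mul_dilationEnergy he hρ hint hu t
    rw [sub_nonneg, henergy]
    exact one_sub_exp_mul_integral_exp_le d t he hdiff
  have hmin : IsLocalMin gap 0 := .of_forall fun t => by
    simpa [gap, dilationEnergy] using hgap t
  have hexp : HasDerivAt (fun t => 1 - exp (-(d * t))) d 0 := by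
    simpa using (((hasDerivAt_id (0 : ℝ)).const_mul d).neg.exp.const_sub 1)
  have hderiv := hmin.hasDerivAt_eq_zero
    ((((hH.hasDerivAt_dilationEnergy he hρ).const_mul c).const_mul d).sub (hexp.mul_const _))
  exact mul_left_cancel₀ hd (sub_eq_zero.1 hderiv)

theorem IsLogProfile.integral_exp_le [Nontrivial E] (hH : IsLogProfile H) {u ρ : E → ℝ}
    {c C κ : ℝ} (hc : 0 < c) (hκ : 0 < κ)
    (he : Integrable (fun x => exp (Module.finrank ℝ E * u x)) μ) (hρ : Integrable ρ μ)
    (hle : ∀ x, κ * exp (Module.finrank ℝ E * u x) ≤ ρ x)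
    (hint : ∀ x ≠ 0, Integrable (fun y => H (logRatio x y) * ρ y) μ)
    (hu : ∀ x ≠ 0, u x = C - c * ∫ y, H (logRatio x y) * ρ y ∂μ) :
    ∫ x, exp (Module.finrank ℝ E * u x) ∂μ ≤ 2 / (c * κ) ∧
      (∫ x, exp (Module.finrank ℝ E * u x) ∂μ = 2 / (c * κ) ↔
        ρ =ᵐ[μ] fun x => κ * exp (Module.finrank ℝ E * u x)) := by
  set e : E → ℝ := fun x => exp (Module.finrank ℝ E * u x)
  set V := ∫ x, e x ∂μ
  have hV : 0 < V := integral_exp_pos he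
  let excess : E → ℝ := fun x => ρ x - κ * e x
  have hexcess : 0 ≤ excess := fun x => sub_nonneg.2 (hle x)
  have hgap : c * virialForm H μ e excess = V * (1 - c * κ * V / 2) := by
    rw [hH.virialForm_sub_const_mul he hρ he, hH.virialForm_self he, mul_sub,
      hH.mul_virialForm_exp he hρ hint hu]
    ring
  have hnonneg : 0 ≤ virialForm H μ e excess :=
    hH.virialForm_nonneg (fun x => (exp_pos _).le) hexcess
  have heq : V = 2 / (c * κ) ↔ virialForm H μ e excess = 0 := by
    rw [← mul_eq_zero_iff_left hc.ne', hgap, mul_eq_zero_iff_left hV.ne',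
      eq_div_iff (mul_pos hc hκ).ne']
    constructor <;> intro h <;> linarith
  refine ⟨?_, heq.trans ⟨fun h => ?_, fun h => ?_⟩⟩
  · have := nonneg_of_mul_nonneg_right (hgap ▸ mul_nonneg hc.le hnonneg) hV
    rw [le_div_iff₀ (mul_pos hc hκ)]
    linarith
  · exact (hH.ae_eq_zero_of_virialForm_eq_zero he (hρ.sub (he.const_mul κ)) (fun x => exp_pos _)
      hexcess h).mono fun x hx => sub_eq_zero.1 hx
  · have : (fun p : E × E => e p.1 * excess p.2 * deriv H (logRatio p.1 p.2)) =ᵐ[μ.prod μ] 0 := by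
      filter_upwards [Measure.quasiMeasurePreserving_snd.ae h] with p hp
      simp [excess, hp, e]
    exact integral_eq_zero_of_ae this

end Energy

/-! ### Radial logarithmic potentials -/

section Radial

variable {E : Type*} [NormedAddCommGroup E] [InnerProductSpace ℝ E] [FiniteDimensional ℝ E]
  [MeasurableSpace E] [BorelSpace E]

lemma integrable_log_norm_div_norm_smul_sub_mul (hE : 2 ≤ Module.finrank ℝ E) {ρ : E → ℝ}
    (hρ : Continuous ρ) (hρi : Integrable ρ) (r : ℝ) :
    Integrable (fun p : E × E => log (‖p.2‖ / ‖r • p.1 - p.2‖) * ρ p.2)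
      ((unitSphereMeasure E).prod volume) := by
  have : Nontrivial E := Module.nontrivial_of_finrank_pos (R := ℝ) (by omega)
  have hmeas : Measurable fun p : E × E => log (‖p.2‖ / ‖r • p.1 - p.2‖) * ρ p.2 := by
    have := hρ.measurable
    fun_prop
  obtain ⟨M, hM⟩ := exists_integral_norm_log_norm_div_norm_sub_mul_le hE hρ hρi |r|
  have hM' : ∀ᵐ ω ∂unitSphereMeasure E,
      Integrable (fun y => log (‖y‖ / ‖r • ω - y‖) * ρ y) ∧
        ∫ y, ‖log (‖y‖ / ‖r • ω - y‖) * ρ y‖ ≤ M := by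
    filter_upwards [ae_unitSphereMeasure_norm_eq_one (E := E)] with ω hω
    exact hM (r • ω) (by rw [norm_smul, hω, mul_one, norm_eq_abs])
  refine (integrable_prod_iff hmeas.aestronglyMeasurable).2 ⟨hM'.mono fun _ => And.left, ?_⟩
  refine Integrable.mono' (integrable_const M)
    hmeas.aestronglyMeasurable.norm.integral_prod_right' ?_
  filter_upwards [hM'] with ω hω
  rw [norm_of_nonneg (integral_nonneg fun y => norm_nonneg _)]
  exact hω.2

lemma integral_log_norm_div_norm_smul_sub_mul_ae_eq {b : Fin 2 → E} (hb : Orthonormal ℝ b)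
    (ρ : E → ℝ) {x : E} (hx : x ≠ 0) :
    (fun y => ∫ ω, log (‖y‖ / ‖‖x‖ • ω - y‖) * ρ y ∂unitSphereMeasure E) =ᵐ[volume]
      fun y => -(sphereLogMean b (logRatio x y) * ρ y) := by
  have : Nontrivial E := ⟨x, 0, hx⟩
  filter_upwards [ae_norm_ne (E := E) 0, ae_norm_ne (E := E) ‖x‖] with y hy hxy
  rw [integral_mul_const, integral_log_norm_div_norm_smul_sub hb (norm_pos_iff.2 hx)
    (norm_ne_zero_iff.1 hy) hxy.symm, neg_mul, logRatio]

lemma integrable_sphereLogMean_logRatio_mul (hE : 2 ≤ Module.finrank ℝ E) {b : Fin 2 → E}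
    (hb : Orthonormal ℝ b) {ρ : E → ℝ} (hρ : Continuous ρ) (hρi : Integrable ρ) {x : E}
    (hx : x ≠ 0) :
    Integrable fun y => sphereLogMean b (logRatio x y) * ρ y :=
  (((integrable_log_norm_div_norm_smul_sub_mul hE hρ hρi ‖x‖).integral_prod_right.congr
    (integral_log_norm_div_norm_smul_sub_mul_ae_eq hb ρ hx)).neg).congr
    (.of_forall fun _ => neg_neg _)

lemma integral_logPotential_smul_unitSphereMeasure (hE : 2 ≤ Module.finrank ℝ E)
    {b : Fin 2 → E} (hb : Orthonormal ℝ b) {ρ : E → ℝ} (hρ : Continuous ρ) (hρi : Integrable ρ)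
    {x : E} (hx : x ≠ 0) :
    ∫ ω, (∫ y, log (‖y‖ / ‖‖x‖ • ω - y‖) * ρ y) ∂unitSphereMeasure E =
      -∫ y, sphereLogMean b (logRatio x y) * ρ y := by
  rw [integral_integral_swap (integrable_log_norm_div_norm_smul_sub_mul hE hρ hρi ‖x‖),
    integral_congr_ae (integral_log_norm_div_norm_smul_sub_mul_ae_eq hb ρ hx), integral_neg]

lemma radial_logPotential_eq (hE : 2 ≤ Module.finrank ℝ E)
    {b : Fin 2 → E} (hb : Orthonormal ℝ b) {u ρ : E → ℝ} {c C : ℝ} (hρ : Continuous ρ)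
    (hρi : Integrable ρ) (hradial : ∀ x y, ‖x‖ = ‖y‖ → u x = u y)
    (hu : ∀ x, u x = c * (∫ y, log (‖y‖ / ‖x - y‖) * ρ y) + C) {x : E} (hx : x ≠ 0) :
    u x = C - c * ∫ y, sphereLogMean b (logRatio x y) * ρ y := by
  have : Nontrivial E := ⟨x, 0, hx⟩
  have hmean := integral_logPotential_smul_unitSphereMeasure hE hb hρ hρi hx
  calc u x = ∫ _, (u x - C) ∂unitSphereMeasure E + C := by simp
    _ = ∫ ω, c * (∫ y, log (‖y‖ / ‖‖x‖ • ω - y‖) * ρ y) ∂unitSphereMeasure E + C := by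
      congr 1
      refine integral_congr_ae ?_
      filter_upwards [ae_unitSphereMeasure_norm_eq_one (E := E)] with ω hω
      rw [hradial x (‖x‖ • ω) (by rw [norm_smul, norm_norm, hω, mul_one]), hu,
        add_sub_cancel_right]
    _ = C - c * ∫ y, sphereLogMean b (logRatio x y) * ρ y := by
      rw [integral_const_mul, hmean]
      ring

lemma integrable_of_integrable_mul_of_le {α : Type*} [MeasurableSpace α] {μ : Measure α}
    {f g : α → ℝ} {κ : ℝ} (hκ : 0 < κ) (hg : ∀ x, κ ≤ g x) (hf : AEStronglyMeasurable f μ)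
    (hgf : Integrable (fun x => g x * f x) μ) : Integrable f μ := by
  refine (hgf.norm.const_mul κ⁻¹).mono' hf (.of_forall fun x => ?_)
  rw [norm_mul, ← mul_assoc]
  refine le_mul_of_one_le_left (norm_nonneg _) ?_
  rw [inv_mul_eq_div, one_le_div hκ]
  exact (hg x).trans (le_abs_self _)

theorem integral_exp_le_of_radial_logPotential (hE : 2 ≤ Module.finrank ℝ E) {u Q : E → ℝ}
    {c C κ : ℝ} (hc : 0 < c) (hκ : 0 < κ) (huc : Continuous u) (hQc : Continuous Q)
    (hQ : ∀ x, κ ≤ Q x)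
    (hρ : Integrable fun x => Q x * exp (Module.finrank ℝ E * u x))
    (hradial : ∀ x y, ‖x‖ = ‖y‖ → u x = u y)
    (hu : ∀ x, u x = c * (∫ y, log (‖y‖ / ‖x - y‖) *
      (Q y * exp (Module.finrank ℝ E * u y))) + C) :
    ∫ x, exp (Module.finrank ℝ E * u x) ≤ 2 / (c * κ) ∧
      (∫ x, exp (Module.finrank ℝ E * u x) = 2 / (c * κ) ↔ ∀ x, Q x = κ) := by
  have : Nontrivial E := Module.nontrivial_of_finrank_pos (R := ℝ) (by omega)
  have hb := (stdOrthonormalBasis ℝ E).orthonormal.comp (Fin.castLE hE) (Fin.castLE_injective hE)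
  have hρc : Continuous fun x => Q x * exp (Module.finrank ℝ E * u x) := by fun_prop
  have he : Integrable fun x => exp (Module.finrank ℝ E * u x) :=
    integrable_of_integrable_mul_of_le hκ hQ
      (Continuous.aestronglyMeasurable (by fun_prop)) hρ
  have hbol := (isLogProfile_sphereLogMean hb).integral_exp_le hc hκ he hρ
    (fun x => mul_le_mul_of_nonneg_right (hQ x) (exp_pos _).le)
    (fun x hx => integrable_sphereLogMean_logRatio_mul hE hb hρc hρ hx)
    (fun x hx => radial_logPotential_eq hE hb hρc hρ hradial hu hx)
  refine ⟨hbol.1, hbol.2.trans ?_⟩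
  rw [hρc.ae_eq_iff_eq volume (by fun_prop), funext_iff]
  exact forall_congr' fun x => mul_left_inj' (exp_ne_zero _)

end Radial

/-! ### Normal solutions -/

lemma sphereVol_pos (n : ℕ) : 0 < sphereVol n := by
  have := Gamma_pos_of_pos (s := (n + 1 : ℝ) / 2) (by positivity)
  unfold sphereVol
  positivity

-- In `IsNormalSolution` the constant lies under the integral sign, so if it were nonzero the
-- integrand would not be integrable and the integral would take the junk value `0`; then `u = 0`,
-- which contradicts the integrability of `Q ≥ κ`.
lemma IsNormalSolution.eq_logPotential {n : ℕ} (hn : 2 ≤ n) {u Q : EuclideanSpace ℝ (Fin n) → ℝ}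
    (h : IsNormalSolution n u Q) {κ : ℝ} (hκ : 0 < κ) (hQ : ∀ x, κ ≤ Q x)
    (x : EuclideanSpace ℝ (Fin n)) :
    u x = 2 / ((Nat.factorial (n - 1) : ℝ) * sphereVol n) *
      ∫ y, log (‖y‖ / ‖x - y‖) * (Q y * exp (n * u y)) := by
  obtain ⟨hu, hQs, hρi, C, hC⟩ := h
  have hE : 2 ≤ Module.finrank ℝ (EuclideanSpace ℝ (Fin n)) := by simpa using hn
  have : Nontrivial (EuclideanSpace ℝ (Fin n)) :=
    Module.nontrivial_of_finrank_pos (R := ℝ) (by omega)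
  have hconst {a : ℝ} (h : Integrable fun _ : EuclideanSpace ℝ (Fin n) => a) : a = 0 := by
    refine (integrable_const_iff.1 h).resolve_right fun hfin => ?_
    exact (measure_lt_top volume (Set.univ : Set (EuclideanSpace ℝ (Fin n)))).ne (by simp)
  have hC0 : C = 0 := by
    by_contra hC0
    have huc := hu.continuous
    have hQc := hQs.continuous
    have hzero (x) : u x = 0 := by
      obtain ⟨M, hM⟩ := exists_integral_norm_log_norm_div_norm_sub_mul_le hE (by fun_prop) hρi ‖x‖
      rw [hC, integral_undef, mul_zero]
      exact fun h => hC0 (hconst ((h.sub (hM x le_rfl).1).congr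
        (.of_forall fun y => add_sub_cancel_left _ _)))
    have : Integrable fun _ : EuclideanSpace ℝ (Fin n) => (1 : ℝ) :=
      integrable_of_integrable_mul_of_le hκ hQ aestronglyMeasurable_const
        (by simpa [hzero] using hρi)
    exact one_ne_zero (hconst this)
  simpa [hC0] using hC x

theorem radial_bol_lower_curvature_general (n : ℕ) (hn : 2 ≤ n)
    (u Q : EuclideanSpace ℝ (Fin n) → ℝ) (hnormal : IsNormalSolution n u Q)
    (hradial : ∀ x y : EuclideanSpace ℝ (Fin n), ‖x‖ = ‖y‖ → u x = u y)
    {κ : ℝ} (hκ : 0 < κ) (hQl : ∀ x, κ ≤ Q x) :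
    (∫⁻ x, ENNReal.ofReal (exp (n * u x))) ≤
      ENNReal.ofReal ((n - 1).factorial * sphereVol n / κ) ∧
    ((∫⁻ x, ENNReal.ofReal (exp (n * u x))) =
      ENNReal.ofReal ((n - 1).factorial * sphereVol n / κ) ↔ ∀ x, Q x = κ) := by
  have hmass : (0 : ℝ) < (n - 1).factorial * sphereVol n :=
    mul_pos (Nat.cast_pos.2 (Nat.factorial_pos _)) (sphereVol_pos n)
  have hpotential := hnormal.eq_logPotential hn hκ hQl
  obtain ⟨hu, hQ, hρ, -⟩ := hnormal
  have he : Integrable fun x => exp (n * u x) :=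
    integrable_of_integrable_mul_of_le hκ hQl (by have := hu.continuous; fun_prop) hρ
  have hbol := integral_exp_le_of_radial_logPotential (C := 0) (by simpa using hn)
    (div_pos two_pos hmass) hκ hu.continuous hQ.continuous hQl
    (by simpa using hρ) hradial (by simpa using hpotential)
  rw [finrank_euclideanSpace_fin, div_mul_eq_mul_div, div_div_eq_mul_div,
    mul_div_mul_left _ _ two_ne_zero] at hbol
  rw [← ofReal_integral_eq_lintegral_ofReal he (.of_forall fun x => (exp_pos _).le),
    ENNReal.ofReal_eq_ofReal_iff (integral_nonneg fun x => (exp_pos _).le) (div_pos hmass hκ).le]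
  exact ⟨ENNReal.ofReal_le_ofReal hbol.1, hbol.2⟩

theorem radial_bol_lower_curvature (n : ℕ) (hn : 2 ≤ n) (heven : Even n)
    (u Q : EuclideanSpace ℝ (Fin n) → ℝ)
    (hnormal : IsNormalSolution n u Q)
    (hradial : ∀ x y : EuclideanSpace ℝ (Fin n), ‖x‖ = ‖y‖ → u x = u y)
    (C k : ℝ) (hC : 0 < C) (hk : 0 ≤ k)
    (hQl : ∀ x, (Nat.factorial (n - 1) : ℝ) ≤ Q x)
    (hQu : ∀ x, Q x ≤ C * (‖x‖ + 1) ^ k) :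
    (∫⁻ x, ENNReal.ofReal (Real.exp (n * u x))) ≤ ENNReal.ofReal (sphereVol n) ∧
    ((∫⁻ x, ENNReal.ofReal (Real.exp (n * u x))) = ENNReal.ofReal (sphereVol n) ↔
      ∀ x, Q x = (Nat.factorial (n - 1) : ℝ)) := by
  have hfac : ((n - 1).factorial : ℝ) ≠ 0 := Nat.cast_ne_zero.2 (n - 1).factorial_ne_zero
  simpa [hfac] using
    radial_bol_lower_curvature_general n hn u Q hnormal hradial (by positivity) hQl
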